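/- For every real α with 1 − 2/k₁ < α < 1 there exists a real number k > k₁ such that f(k) < α < 1 − 2/k. -/

import Mathlib

noncomputable def f (k : ℝ) : ℝ :=
  1 - (2 * k * Real.sqrt (k - 1) - 4 * k + 4) / (k - 2) ^ 2

noncomputable def k₁ : ℝ :=
  2 + (2 + Real.sqrt (44 / 27)) ^ ((1 : ℝ) / 3)
    + (2 - Real.sqrt (44 / 27)) ^ ((1 : ℝ) / 3)

/-- Cardano's formula: `k₁ - 2` is a positive root of `u ^ 3 - 4 * u - 4`. -/
theorem k₁_sub_two_root : 0 < k₁ - 2 ∧ (k₁ - 2) ^ 3 = 4 * (k₁ - 2) + 4 := by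
  have hs : Real.sqrt (44 / 27) ^ 2 = 44 / 27 := Real.sq_sqrt (by norm_num)
  have hs0 : 0 ≤ Real.sqrt (44 / 27) := Real.sqrt_nonneg _
  have hs2 : Real.sqrt (44 / 27) < 2 := by nlinarith
  unfold k₁
  set s := Real.sqrt (44 / 27)
  have hp : 0 < 2 + s := by linarith
  have hm : 0 < 2 - s := by linarith
  have cube_rpow (x : ℝ) (hx : 0 < x) : (x ^ ((1 : ℝ) / 3)) ^ 3 = x := by
    rw [← Real.rpow_natCast, ← Real.rpow_mul hx.le]
    norm_num
  have ha := cube_rpow _ hp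
  have hb := cube_rpow _ hm
  have ha0 := Real.rpow_pos_of_pos hp ((1 : ℝ) / 3)
  have hb0 := Real.rpow_pos_of_pos hm ((1 : ℝ) / 3)
  set a := (2 + s) ^ ((1 : ℝ) / 3)
  set b := (2 - s) ^ ((1 : ℝ) / 3)
  have hab : a * b = 4 / 3 := by
    refine (pow_left_inj₀ (by positivity) (by norm_num) three_ne_zero).1 ?_
    rw [mul_pow, ha, hb]
    linarith
  exact ⟨by linarith, by linear_combination ha + hb + 3 * (a + b) * hab⟩

theorem two_lt_k₁ : 2 < k₁ := by
  linarith [k₁_sub_two_root.1]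

theorem cubic_pos_of_k₁_lt {k : ℝ} (hk : k₁ < k) : 0 < k ^ 3 - 6 * k ^ 2 + 8 * k - 4 := by
  obtain ⟨hu, hroot⟩ := k₁_sub_two_root
  have hu2 : 2 < k₁ - 2 := by
    by_contra! h
    nlinarith [mul_nonneg hu.le (sub_nonneg.2 h)]
  have hd : 0 < k - k₁ := sub_pos.2 hk
  have hfac : k ^ 3 - 6 * k ^ 2 + 8 * k - 4 =
      (k - k₁) * ((k - 2) ^ 2 + (k - 2) * (k₁ - 2) + (k₁ - 2) ^ 2 - 4) := by
    linear_combination hroot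
  rw [hfac]
  refine mul_pos hd ?_
  nlinarith [mul_pos (hu.trans (sub_lt_sub_right hk 2)) hu]

theorem f_lt_one_sub_two_div {k : ℝ} (hk : k₁ < k) : f k < 1 - 2 / k := by
  have hk2 : 2 < k := two_lt_k₁.trans hk
  have hs : Real.sqrt (k - 1) ^ 2 = k - 1 := Real.sq_sqrt (by linarith)
  have key : 3 * k ^ 2 - 6 * k + 4 < k ^ 2 * Real.sqrt (k - 1) := by
    refine lt_of_pow_lt_pow_left₀ 2 (by positivity) ?_
    rw [mul_pow, hs]
    have := mul_pos (cubic_pos_of_k₁_lt hk) (pow_pos (sub_pos.2 hk2) 2)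
    linarith
  unfold f
  have h : 2 / k < (2 * k * Real.sqrt (k - 1) - 4 * k + 4) / (k - 2) ^ 2 := by
    rw [div_lt_div_iff₀ (by linarith) (pow_pos (sub_pos.2 hk2) 2)]
    linarith
  linarith

theorem continuousAt_f {k : ℝ} (hk : k ≠ 2) : ContinuousAt f k := by
  have : (k - 2) ^ 2 ≠ 0 := pow_ne_zero 2 (sub_ne_zero.2 hk)
  unfold f
  fun_prop (disch := assumption)

theorem stmt8 (α : ℝ) (h1 : 1 - 2 / k₁ < α) (h2 : α < 1) :
    ∃ k : ℝ, k₁ < k ∧ f k < α ∧ α < 1 - 2 / k := by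
  have h0 : 0 < k₁ := two_pos.trans two_lt_k₁
  have hα : 0 < 1 - α := sub_pos.2 h2
  have hk : k₁ < 2 / (1 - α) := by
    rw [lt_div_comm₀ h0 hα]
    linarith
  have hf := f_lt_one_sub_two_div hk
  rw [div_div_cancel₀ two_ne_zero, sub_sub_cancel] at hf
  have hcont := continuousAt_f (two_lt_k₁.trans hk).ne'
  obtain ⟨k, hfk, hlt⟩ := (((hcont.eventually_lt_const hf).filter_mono
    nhdsWithin_le_nhds).and self_mem_nhdsWithin : ∀ᶠ k in nhdsWithin (2 / (1 - α))
      (Set.Ioi (2 / (1 - α))), f k < α ∧ k ∈ Set.Ioi (2 / (1 - α))).exists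
  refine ⟨k, hk.trans hlt, hfk, ?_⟩
  have : 2 / k < 1 - α := (div_lt_comm₀ hα (h0.trans (hk.trans hlt))).1 hlt
  linarith
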